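/- Let δ > 2, φ > 0, C₁ ≥ 0, C₂ ≥ 0 be real numbers with φ·(1 − 2/δ) > 1, and let N, T be positive integers. Let a₁, …, a_N : Ω → ℝ^T be random vectors on a probability space such that for each i the coordinate process (a_{i1}, …, a_{iT}) has E[a_{it}] = 0 and (E|a_{it}|^δ)^{1/δ} ≤ C₁ for every t, and its strong mixing coefficients satisfy α_i(q) ≤ C₂ · q^{−φ} for every positive integer q. Then the averaged second-moment matrix Σ := N^{−1} Σ_{i=1}^N E[a_i a_iᵀ] satisfies ‖Σ‖_2 ≤ C₁² · ( 1 + 16 · C₂^{1 − 2/δ} · Σ_{q=1}^∞ q^{−φ(1 − 2/δ)} ). -/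

import Mathlib

open MeasureTheory

/-- The Euclidean (`ℓ²`) norm of a vector in `ℝ^n`. -/
noncomputable def vecL2Norm {n : ℕ} (x : Fin n → ℝ) : ℝ :=
  Real.sqrt (∑ i, x i ^ 2)

/-- The spectral norm of a real matrix: the operator norm induced by the
Euclidean vector norms. -/
noncomputable def matSpecNorm {m n : ℕ} (A : Matrix (Fin m) (Fin n) ℝ) : ℝ :=
  sSup {c : ℝ | ∃ x : Fin n → ℝ, vecL2Norm x ≤ 1 ∧ c = vecL2Norm (A.mulVec x)}

/-- The strong (α-)mixing coefficient of a finite real-valued process `ξ`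
(indexed by `Fin T`) at lag `q`. -/
noncomputable def alphaMixFin {Ω : Type*} [MeasurableSpace Ω] (μ : Measure Ω)
    {T : ℕ} (ξ : Fin T → Ω → ℝ) (q : ℕ) : ℝ :=
  sSup {x : ℝ | ∃ t : ℕ, ∃ A B : Set Ω,
    MeasurableSet[⨆ s : {s : Fin T // (s : ℕ) ≤ t},
      MeasurableSpace.comap (ξ s.1) inferInstance] A ∧
    MeasurableSet[⨆ s : {s : Fin T // t + q ≤ (s : ℕ)},
      MeasurableSpace.comap (ξ s.1) inferInstance] B ∧
    x = |(μ (A ∩ B)).toReal - (μ A).toReal * (μ B).toReal|}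

/-!
Truncating two random variables at levels fixed by their `Lᵖ` norms leaves bounded
variables, whose covariance is at most four times the mixing coefficient, plus tails which Young's
inequality controls both under the joint law and under the product of the marginals. Balancing the
two contributions gives Davydov's inequality with constant `6`. Along the rows of the second-moment
matrix of a mixing process it makes the entry at lag `q` decay like `q ^ (-φ (1 - 2/δ))`, so all
absolute row sums are bounded uniformly in the dimension. This bound survives averaging over the
processes, and Schur's test turns it into a bound on the spectral norm.
-/

section Covariance

open ProbabilityTheory

variable {Ω : Type*} {m mΩ : MeasurableSpace Ω} {μ : Measure Ω} {X Y : Ω → ℝ} {K a : ℝ}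

lemma integral_abs_condExp_le_two_mul [IsFiniteMeasure μ] (hm : m ≤ mΩ) (hY : Integrable Y μ)
    (hK : ∀ A, MeasurableSet[m] A → |∫ ω in A, Y ω ∂μ| ≤ K) :
    ∫ ω, |(μ[Y|m]) ω| ∂μ ≤ 2 * K := by
  set W := μ[Y|m] with hW
  have hWm : Measurable[m] W := stronglyMeasurable_condExp.measurable
  have hpos : MeasurableSet[m] {ω | 0 ≤ W ω} := measurableSet_le measurable_const hWm
  have hneg : MeasurableSet[m] {ω | W ω ≤ 0} := measurableSet_le hWm measurable_const
  calc ∫ ω, |W ω| ∂μ = ∫ ω in {ω | 0 ≤ W ω}, W ω ∂μ - ∫ ω in {ω | W ω ≤ 0}, W ω ∂μ :=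
        integral_norm_eq_pos_sub_neg integrable_condExp
    _ = ∫ ω in {ω | 0 ≤ W ω}, Y ω ∂μ - ∫ ω in {ω | W ω ≤ 0}, Y ω ∂μ := by
        rw [hW, setIntegral_condExp hm hY hpos, setIntegral_condExp hm hY hneg]
    _ ≤ 2 * K := by
        linarith [(le_abs_self _).trans (hK _ hpos), (neg_le_abs _).trans (hK _ hneg)]

lemma abs_integral_mul_le_mul_integral_abs_condExp [IsFiniteMeasure μ] (hm : m ≤ mΩ)
    (hX : Measurable[m] X) (hXa : ∀ ω, |X ω| ≤ a) (hY : Integrable Y μ) :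
    |∫ ω, X ω * Y ω ∂μ| ≤ a * ∫ ω, |(μ[Y|m]) ω| ∂μ := by
  have hXY : Integrable (X * Y) μ :=
    hY.bdd_mul (hX.mono hm le_rfl).aestronglyMeasurable (.of_forall hXa)
  have hpull : ∫ ω, X ω * Y ω ∂μ = ∫ ω, X ω * (μ[Y|m]) ω ∂μ := by
    rw [← integral_condExp hm]
    exact integral_congr_ae
      (condExp_mul_of_stronglyMeasurable_left hX.stronglyMeasurable hXY hY)
  rw [hpull, ← integral_const_mul]
  refine abs_integral_le_integral_abs.trans <| integral_mono_of_nonneg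
    (.of_forall fun _ ↦ abs_nonneg _) (integrable_condExp.abs.const_mul a) (.of_forall fun ω ↦ ?_)
  simpa only [abs_mul] using mul_le_mul_of_nonneg_right (hXa ω) (abs_nonneg _)

lemma integrable_indicator_one [IsFiniteMeasure μ] {A : Set Ω} (hA : MeasurableSet A) :
    Integrable (A.indicator (1 : Ω → ℝ)) μ :=
  (integrable_const 1).indicator hA

variable [IsProbabilityMeasure μ]

lemma covariance_eq_integral_mul_sub (hX : Integrable X μ) (hY : Integrable Y μ)
    (hXY : Integrable (fun ω ↦ X ω * Y ω) μ) : cov[X, Y; μ] = ∫ ω, X ω * (Y ω - μ[Y]) ∂μ := by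
  have hXY' : Integrable (fun ω ↦ X ω * (Y ω - μ[Y])) μ := by
    simp only [mul_sub]
    exact hXY.sub (hX.mul_const _)
  have hY' : Integrable (fun ω ↦ Y ω - μ[Y]) μ := hY.sub (integrable_const _)
  simp_rw [covariance, sub_mul]
  rw [integral_sub hXY' (hY'.const_mul _), integral_const_mul, integral_sub hY (integrable_const _)]
  simp

lemma covariance_eq_integral_mul_sub_mul (hX : Integrable X μ) (hY : Integrable Y μ)
    (hXY : Integrable (fun ω ↦ X ω * Y ω) μ) : cov[X, Y; μ] = ∫ ω, X ω * Y ω ∂μ - μ[X] * μ[Y] := by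
  rw [covariance_eq_integral_mul_sub hX hY hXY]
  simp_rw [mul_sub]
  rw [integral_sub hXY (hX.mul_const _), integral_mul_const]

lemma covariance_indicator_one_left {A : Set Ω} (hA : MeasurableSet A) (hY : Integrable Y μ) :
    cov[A.indicator 1, Y; μ] = ∫ ω in A, (Y ω - μ[Y]) ∂μ := by
  have hind (Z : Ω → ℝ) (ω : Ω) : A.indicator 1 ω * Z ω = A.indicator Z ω := by
    by_cases h : ω ∈ A <;> simp [h]
  rw [covariance_eq_integral_mul_sub (integrable_indicator_one hA) hY
    (by simpa only [hind] using hY.indicator hA), ← integral_indicator hA]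
  simp_rw [← hind fun ω ↦ Y ω - μ[Y]]

lemma covariance_indicator_one_indicator_one {A B : Set Ω} (hA : MeasurableSet A)
    (hB : MeasurableSet B) :
    cov[A.indicator 1, B.indicator 1; μ] = μ.real (A ∩ B) - μ.real A * μ.real B := by
  rw [covariance_indicator_one_left hA (integrable_indicator_one hB),
    integral_sub (integrable_indicator_one hB).integrableOn (integrable_const _),
    setIntegral_indicator hB, integral_indicator_one hB]
  simp

-- Only the conditional expectation of `Y` given `m` matters, and on the two events where it has
-- constant sign the covariance is that of an indicator with `Y`.
lemma abs_covariance_le_of_forall_indicator (hm : m ≤ mΩ) (hX : Measurable[m] X)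
    (hXa : ∀ ω, |X ω| ≤ a) (hY : Integrable Y μ)
    (hK : ∀ A, MeasurableSet[m] A → |cov[A.indicator 1, Y; μ]| ≤ K) :
    |cov[X, Y; μ]| ≤ 2 * a * K := by
  obtain ⟨ω₀⟩ := nonempty_of_isProbabilityMeasure μ
  have ha : 0 ≤ a := (abs_nonneg _).trans (hXa ω₀)
  have hXm : AEStronglyMeasurable X μ := (hX.mono hm le_rfl).aestronglyMeasurable
  have hYc : Integrable (fun ω ↦ Y ω - μ[Y]) μ := hY.sub (integrable_const _)
  rw [covariance_eq_integral_mul_sub (.of_bound hXm a (.of_forall hXa)) hY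
    (hY.bdd_mul hXm (.of_forall hXa))]
  calc |∫ ω, X ω * (Y ω - μ[Y]) ∂μ| ≤ a * ∫ ω, |(μ[fun ω ↦ Y ω - μ[Y]|m]) ω| ∂μ :=
        abs_integral_mul_le_mul_integral_abs_condExp hm hX hXa hYc
    _ ≤ a * (2 * K) := by
        gcongr
        refine integral_abs_condExp_le_two_mul hm hYc fun A hA ↦ ?_
        rw [← covariance_indicator_one_left (hm _ hA) hY]
        exact hK A hA
    _ = 2 * a * K := by ring

end Covariance

/-- The strong (α-)mixing coefficient of two σ-algebras, which measures how far they are from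
being independent under `μ`. -/
noncomputable def strongMixingCoeff {Ω : Type*} [MeasurableSpace Ω] (μ : Measure Ω)
    (m₁ m₂ : MeasurableSpace Ω) : ℝ :=
  sSup {x | ∃ A B, MeasurableSet[m₁] A ∧ MeasurableSet[m₂] B ∧
    x = |μ.real (A ∩ B) - μ.real A * μ.real B|}

section StrongMixing

open ProbabilityTheory

variable {Ω : Type*} {m₁ m₂ mΩ : MeasurableSpace Ω} {μ : Measure Ω}

lemma strongMixingCoeff_nonneg : 0 ≤ strongMixingCoeff μ m₁ m₂ :=
  Real.sSup_nonneg fun _ ⟨_, _, _, _, h⟩ ↦ h ▸ abs_nonneg _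

variable [IsProbabilityMeasure μ]

lemma abs_measureReal_inter_sub_mul_le_one (A B : Set Ω) :
    |μ.real (A ∩ B) - μ.real A * μ.real B| ≤ 1 :=
  abs_sub_le_of_nonneg_of_le measureReal_nonneg measureReal_le_one
    (by positivity) (mul_le_one₀ measureReal_le_one measureReal_nonneg measureReal_le_one)

lemma abs_measureReal_inter_sub_mul_le_strongMixingCoeff {A B : Set Ω}
    (hA : MeasurableSet[m₁] A) (hB : MeasurableSet[m₂] B) :
    |μ.real (A ∩ B) - μ.real A * μ.real B| ≤ strongMixingCoeff μ m₁ m₂ := by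
  refine le_csSup ⟨1, ?_⟩ ⟨A, B, hA, hB, rfl⟩
  rintro _ ⟨A, B, -, -, rfl⟩
  exact abs_measureReal_inter_sub_mul_le_one A B

theorem abs_covariance_le_four_mul_strongMixingCoeff {X Y : Ω → ℝ} {a b : ℝ}
    (hm₁ : m₁ ≤ mΩ) (hm₂ : m₂ ≤ mΩ) (hX : Measurable[m₁] X) (hY : Measurable[m₂] Y)
    (hXa : ∀ ω, |X ω| ≤ a) (hYb : ∀ ω, |Y ω| ≤ b) :
    |cov[X, Y; μ]| ≤ 4 * strongMixingCoeff μ m₁ m₂ * a * b := by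
  have hYi : Integrable Y μ :=
    .of_bound (hY.mono hm₂ le_rfl).aestronglyMeasurable b (.of_forall hYb)
  calc |cov[X, Y; μ]| ≤ 2 * a * (2 * b * strongMixingCoeff μ m₁ m₂) := by
        refine abs_covariance_le_of_forall_indicator hm₁ hX hXa hYi fun A hA ↦ ?_
        rw [covariance_comm]
        refine abs_covariance_le_of_forall_indicator hm₂ hY hYb
          (integrable_indicator_one (hm₁ _ hA)) fun B hB ↦ ?_
        rw [covariance_comm, covariance_indicator_one_indicator_one (hm₁ _ hA) (hm₂ _ hB)]
        exact abs_measureReal_inter_sub_mul_le_strongMixingCoeff hA hB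
    _ = 4 * strongMixingCoeff μ m₁ m₂ * a * b := by ring

end StrongMixing

section Truncation

open ProbabilityTheory

/-- The truncation of a real number to `[-1, 1]`; other truncation levels are reached by rescaling
the random variable. -/
noncomputable def clampUnit (x : ℝ) : ℝ := max (-1) (min 1 x)

lemma measurable_clampUnit : Measurable clampUnit := by
  unfold clampUnit; fun_prop

lemma abs_clampUnit_le_one (x : ℝ) : |clampUnit x| ≤ 1 :=
  abs_le.mpr ⟨le_max_left _ _, max_le (by norm_num) (min_le_left _ _)⟩

lemma abs_sub_clampUnit (x : ℝ) : |x - clampUnit x| = max 1 |x| - 1 := by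
  unfold clampUnit
  grind

lemma abs_mul_sub_clampUnit_mul_clampUnit_le_max_mul_max (x y : ℝ) :
    |x * y - clampUnit x * clampUnit y| ≤ max 1 |x| * max 1 |y| - 1 := by
  have hx : |(x - clampUnit x) * clampUnit y| ≤ max 1 |x| - 1 := by
    rw [abs_mul, abs_sub_clampUnit]
    exact mul_le_of_le_one_right (by simp) (abs_clampUnit_le_one y)
  have hy : |clampUnit x * (y - clampUnit y)| ≤ max 1 |y| - 1 := by
    rw [abs_mul, abs_sub_clampUnit]
    exact mul_le_of_le_one_left (by simp) (abs_clampUnit_le_one x)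
  have hxy : |(x - clampUnit x) * (y - clampUnit y)| = (max 1 |x| - 1) * (max 1 |y| - 1) := by
    rw [abs_mul, abs_sub_clampUnit, abs_sub_clampUnit]
  calc |x * y - clampUnit x * clampUnit y|
      = |(x - clampUnit x) * clampUnit y + clampUnit x * (y - clampUnit y)
          + (x - clampUnit x) * (y - clampUnit y)| := by ring_nf
    _ ≤ _ := abs_add_three _ _ _
    _ ≤ (max 1 |x| - 1) + (max 1 |y| - 1) + (max 1 |x| - 1) * (max 1 |y| - 1) := by
        rw [hxy]; gcongr
    _ = max 1 |x| * max 1 |y| - 1 := by ring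

lemma max_one_rpow_le_one_add {p x : ℝ} (hx : 0 ≤ x) : max 1 x ^ p ≤ 1 + x ^ p := by
  rcases le_total 1 x with h | h
  · simp [h]
  · simp [h, Real.rpow_nonneg hx]

lemma max_one_mul_max_one_sub_one_le {p q x y : ℝ} (hp : 0 < p) (hq : 0 < q)
    (hpq : p⁻¹ + q⁻¹ ≤ 1) (hx : 0 ≤ x) (hy : 0 ≤ y) :
    max 1 x * max 1 y - 1 ≤ p⁻¹ * x ^ p + q⁻¹ * y ^ q := by
  have hyoung := Real.geom_mean_le_arith_mean3_weighted (inv_nonneg.mpr hp.le)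
    (inv_nonneg.mpr hq.le) (sub_nonneg.mpr hpq) (p₁ := max 1 x ^ p) (p₂ := max 1 y ^ q)
    (by positivity) (by positivity) zero_le_one (by ring)
  rw [Real.rpow_rpow_inv (by positivity) hp.ne', Real.rpow_rpow_inv (by positivity) hq.ne',
    Real.one_rpow, mul_one] at hyoung
  have hxp := mul_le_mul_of_nonneg_left (max_one_rpow_le_one_add (p := p) hx) (inv_nonneg.mpr hp.le)
  have hyq := mul_le_mul_of_nonneg_left (max_one_rpow_le_one_add (p := q) hy) (inv_nonneg.mpr hq.le)
  linarith

lemma abs_mul_sub_clampUnit_mul_clampUnit_le {p q : ℝ} (hp : 0 < p) (hq : 0 < q)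
    (hpq : p⁻¹ + q⁻¹ ≤ 1) (x y : ℝ) :
    |x * y - clampUnit x * clampUnit y| ≤ p⁻¹ * |x| ^ p + q⁻¹ * |y| ^ q :=
  (abs_mul_sub_clampUnit_mul_clampUnit_le_max_mul_max x y).trans <|
    max_one_mul_max_one_sub_one_le hp hq hpq (abs_nonneg x) (abs_nonneg y)

variable {Ω : Type*} {mΩ : MeasurableSpace Ω} {μ : Measure Ω} {X Y : Ω → ℝ} {p q : ℝ}

lemma integrable_abs_rpow (hp : 0 < p) (hX : MemLp X (ENNReal.ofReal p) μ) :
    Integrable (fun ω ↦ |X ω| ^ p) μ := by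
  simpa [hp.le] using hX.integrable_norm_rpow (by simpa using hp) ENNReal.ofReal_ne_top

lemma integral_abs_rpow_eq_lpNorm_rpow (hp : 0 < p) (hX : AEStronglyMeasurable X μ) :
    ∫ ω, |X ω| ^ p ∂μ = lpNorm X (ENNReal.ofReal p) μ ^ p := by
  have hnn : 0 ≤ ∫ ω, |X ω| ^ p ∂μ := integral_nonneg fun _ ↦ by positivity
  rw [lpNorm_eq_integral_norm_rpow_toReal (by simpa using hp) ENNReal.ofReal_ne_top hX,
    ENNReal.toReal_ofReal hp.le, Real.rpow_inv_rpow (by simpa using hnn) hp.ne']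
  rfl

lemma integral_abs_div_rpow_le {A a : ℝ} (hp : 0 < p) (ha : 0 < a)
    (hX : AEStronglyMeasurable X μ) (hA : lpNorm X (ENNReal.ofReal p) μ ≤ A) :
    ∫ ω, |X ω / a| ^ p ∂μ ≤ (A / a) ^ p := by
  simp_rw [abs_div, abs_of_pos ha, Real.div_rpow (abs_nonneg _) ha.le]
  rw [integral_div, integral_abs_rpow_eq_lpNorm_rpow hp hX, ← Real.div_rpow lpNorm_nonneg ha.le]
  have := lpNorm_nonneg (f := X) (p := ENNReal.ofReal p) (μ := μ)
  gcongr

section IsFiniteMeasure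

variable [IsFiniteMeasure μ]

lemma integrable_clampUnit_comp (hX : AEStronglyMeasurable X μ) :
    Integrable (fun ω ↦ clampUnit (X ω)) μ :=
  .of_bound (measurable_clampUnit.comp_aemeasurable hX.aemeasurable).aestronglyMeasurable 1
    (.of_forall fun _ ↦ abs_clampUnit_le_one _)

lemma integrable_clampUnit_comp_mul (hX : AEStronglyMeasurable X μ)
    (hY : AEStronglyMeasurable Y μ) :
    Integrable (fun ω ↦ clampUnit (X ω) * clampUnit (Y ω)) μ :=
  (integrable_clampUnit_comp hY).bdd_mul (integrable_clampUnit_comp hX).aestronglyMeasurable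
    (.of_forall fun _ ↦ abs_clampUnit_le_one _)

lemma integrable_mul_of_inv_add_inv_le_one (hp : 0 < p) (hq : 0 < q) (hpq : p⁻¹ + q⁻¹ ≤ 1)
    (hX : MemLp X (ENNReal.ofReal p) μ) (hY : MemLp Y (ENNReal.ofReal q) μ) :
    Integrable (fun ω ↦ X ω * Y ω) μ := by
  have hclamp := integrable_clampUnit_comp_mul hX.1 hY.1
  have hdiff : Integrable (fun ω ↦ X ω * Y ω - clampUnit (X ω) * clampUnit (Y ω)) μ :=
    (((integrable_abs_rpow hp hX).const_mul p⁻¹).add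
      ((integrable_abs_rpow hq hY).const_mul q⁻¹)).mono' ((hX.1.mul hY.1).sub hclamp.1)
      (.of_forall fun ω ↦ abs_mul_sub_clampUnit_mul_clampUnit_le hp hq hpq (X ω) (Y ω))
  exact (hdiff.add hclamp).congr (.of_forall fun _ ↦ sub_add_cancel _ _)

lemma abs_integral_mul_sub_integral_clampUnit_mul_clampUnit_le (hp : 0 < p) (hq : 0 < q)
    (hpq : p⁻¹ + q⁻¹ ≤ 1) (hX : MemLp X (ENNReal.ofReal p) μ)
    (hY : MemLp Y (ENNReal.ofReal q) μ) :
    |∫ ω, X ω * Y ω ∂μ - ∫ ω, clampUnit (X ω) * clampUnit (Y ω) ∂μ| ≤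
      p⁻¹ * ∫ ω, |X ω| ^ p ∂μ + q⁻¹ * ∫ ω, |Y ω| ^ q ∂μ := by
  have hXp := (integrable_abs_rpow hp hX).const_mul p⁻¹
  have hYq := (integrable_abs_rpow hq hY).const_mul q⁻¹
  rw [← integral_sub (integrable_mul_of_inv_add_inv_le_one hp hq hpq hX hY)
    (integrable_clampUnit_comp_mul hX.1 hY.1), ← integral_const_mul, ← integral_const_mul,
    ← integral_add hXp hYq]
  exact abs_integral_le_integral_abs.trans <| integral_mono_of_nonneg
    (.of_forall fun _ ↦ abs_nonneg _) (hXp.add hYq)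
    (.of_forall fun ω ↦ abs_mul_sub_clampUnit_mul_clampUnit_le hp hq hpq (X ω) (Y ω))

end IsFiniteMeasure

variable [IsProbabilityMeasure μ]

-- The previous estimate for an independent copy of the pair, i.e. on the product space.
lemma abs_integral_mul_integral_sub_integral_clampUnit_le (hp : 0 < p) (hq : 0 < q)
    (hpq : p⁻¹ + q⁻¹ ≤ 1) (hX : MemLp X (ENNReal.ofReal p) μ)
    (hY : MemLp Y (ENNReal.ofReal q) μ) :
    |μ[X] * μ[Y] - (∫ ω, clampUnit (X ω) ∂μ) * ∫ ω, clampUnit (Y ω) ∂μ| ≤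
      p⁻¹ * ∫ ω, |X ω| ^ p ∂μ + q⁻¹ * ∫ ω, |Y ω| ^ q ∂μ := by
  have hprod := abs_integral_mul_sub_integral_clampUnit_mul_clampUnit_le hp hq hpq
    (hX.comp_fst μ) (hY.comp_snd μ)
  rw [integral_prod_mul, integral_prod_mul (fun ω ↦ clampUnit (X ω)) (fun ω ↦ clampUnit (Y ω)),
    integral_fun_fst (fun ω ↦ |X ω| ^ p), integral_fun_snd (fun ω ↦ |Y ω| ^ q)] at hprod
  simpa using hprod

lemma integrable_of_inv_add_inv_le_one (hp : 0 < p) (hq : 0 < q) (hpq : p⁻¹ + q⁻¹ ≤ 1)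
    (hX : MemLp X (ENNReal.ofReal p) μ) : Integrable X μ := by
  have : 1 ≤ p := (inv_le_one₀ hp).mp (by linarith [inv_pos.mpr hq])
  exact hX.integrable (by simpa using this)

lemma abs_covariance_sub_covariance_clampUnit_le (hp : 0 < p) (hq : 0 < q)
    (hpq : p⁻¹ + q⁻¹ ≤ 1) (hX : MemLp X (ENNReal.ofReal p) μ)
    (hY : MemLp Y (ENNReal.ofReal q) μ) :
    |cov[X, Y; μ] - cov[fun ω ↦ clampUnit (X ω), fun ω ↦ clampUnit (Y ω); μ]| ≤
      2 * (p⁻¹ * ∫ ω, |X ω| ^ p ∂μ + q⁻¹ * ∫ ω, |Y ω| ^ q ∂μ) := by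
  rw [covariance_eq_integral_mul_sub_mul (integrable_of_inv_add_inv_le_one hp hq hpq hX)
      (integrable_of_inv_add_inv_le_one hq hp (by linarith) hY)
      (integrable_mul_of_inv_add_inv_le_one hp hq hpq hX hY),
    covariance_eq_integral_mul_sub_mul (integrable_clampUnit_comp hX.1)
      (integrable_clampUnit_comp hY.1) (integrable_clampUnit_comp_mul hX.1 hY.1),
    sub_sub_sub_comm, two_mul]
  exact (abs_sub _ _).trans <| add_le_add
    (abs_integral_mul_sub_integral_clampUnit_mul_clampUnit_le hp hq hpq hX hY)
    (abs_integral_mul_integral_sub_integral_clampUnit_le hp hq hpq hX hY)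

end Truncation

section Davydov

open ProbabilityTheory

variable {Ω : Type*} {m₁ m₂ mΩ : MeasurableSpace Ω} {μ : Measure Ω} [IsProbabilityMeasure μ]
  {X Y : Ω → ℝ} {p q : ℝ}

lemma abs_covariance_le_strongMixingCoeff_add_integral (hm₁ : m₁ ≤ mΩ) (hm₂ : m₂ ≤ mΩ)
    (hp : 0 < p) (hq : 0 < q) (hpq : p⁻¹ + q⁻¹ ≤ 1)
    (hX : Measurable[m₁] X) (hY : Measurable[m₂] Y)
    (hXp : MemLp X (ENNReal.ofReal p) μ) (hYq : MemLp Y (ENNReal.ofReal q) μ) :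
    |cov[X, Y; μ]| ≤ 4 * strongMixingCoeff μ m₁ m₂ +
      2 * (p⁻¹ * ∫ ω, |X ω| ^ p ∂μ + q⁻¹ * ∫ ω, |Y ω| ^ q ∂μ) := by
  have hbdd : |cov[fun ω ↦ clampUnit (X ω), fun ω ↦ clampUnit (Y ω); μ]| ≤
      4 * strongMixingCoeff μ m₁ m₂ * 1 * 1 :=
    abs_covariance_le_four_mul_strongMixingCoeff hm₁ hm₂ (measurable_clampUnit.comp hX)
      (measurable_clampUnit.comp hY) (fun _ ↦ abs_clampUnit_le_one _)
      fun _ ↦ abs_clampUnit_le_one _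
  have htrunc := abs_covariance_sub_covariance_clampUnit_le hp hq hpq hXp hYq
  rw [mul_one, mul_one] at hbdd
  linarith [abs_sub_abs_le_abs_sub cov[X, Y; μ]
    cov[fun ω ↦ clampUnit (X ω), fun ω ↦ clampUnit (Y ω); μ]]

-- The truncation levels `A * τ ^ (-p⁻¹)` and `B * τ ^ (-q⁻¹)` make both tail moments equal `τ`.
lemma abs_covariance_le_of_strongMixingCoeff_le {A B τ : ℝ} (hm₁ : m₁ ≤ mΩ) (hm₂ : m₂ ≤ mΩ)
    (hp : 0 < p) (hq : 0 < q) (hpq : p⁻¹ + q⁻¹ ≤ 1)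
    (hX : Measurable[m₁] X) (hY : Measurable[m₂] Y)
    (hXp : MemLp X (ENNReal.ofReal p) μ) (hYq : MemLp Y (ENNReal.ofReal q) μ)
    (hA : 0 < A) (hXA : lpNorm X (ENNReal.ofReal p) μ ≤ A)
    (hB : 0 < B) (hYB : lpNorm Y (ENNReal.ofReal q) μ ≤ B)
    (hτ : 0 < τ) (hmix : strongMixingCoeff μ m₁ m₂ ≤ τ) :
    |cov[X, Y; μ]| ≤ 6 * τ ^ (1 - p⁻¹ - q⁻¹) * A * B := by
  set a := A * τ ^ (-p⁻¹) with ha_def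
  set b := B * τ ^ (-q⁻¹) with hb_def
  have ha : 0 < a := by positivity
  have hb : 0 < b := by positivity
  have level {r C : ℝ} (hr : 0 < r) (hC : 0 < C) : (C / (C * τ ^ (-r⁻¹))) ^ r = τ := by
    rw [Real.rpow_neg hτ.le, div_mul_cancel_left₀ hC.ne', inv_inv,
      Real.rpow_inv_rpow hτ.le hr.ne']
  have hXτ : ∫ ω, |X ω / a| ^ p ∂μ ≤ τ :=
    (integral_abs_div_rpow_le hp ha hXp.1 hXA).trans_eq (level hp hA)
  have hYτ : ∫ ω, |Y ω / b| ^ q ∂μ ≤ τ :=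
    (integral_abs_div_rpow_le hq hb hYq.1 hYB).trans_eq (level hq hB)
  have hscaled : |cov[fun ω ↦ X ω / a, fun ω ↦ Y ω / b; μ]| ≤ 6 * τ := calc
    _ ≤ 4 * strongMixingCoeff μ m₁ m₂ +
        2 * (p⁻¹ * ∫ ω, |X ω / a| ^ p ∂μ + q⁻¹ * ∫ ω, |Y ω / b| ^ q ∂μ) :=
      abs_covariance_le_strongMixingCoeff_add_integral hm₁ hm₂ hp hq hpq
        (hX.div_const a) (hY.div_const b) (by simpa only [div_eq_mul_inv] using hXp.mul_const a⁻¹)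
        (by simpa only [div_eq_mul_inv] using hYq.mul_const b⁻¹)
    _ ≤ 4 * τ + 2 * (p⁻¹ * τ + q⁻¹ * τ) := by gcongr
    _ ≤ 6 * τ := by nlinarith
  rw [covariance_fun_div_left, covariance_fun_div_right, abs_div, abs_div, abs_of_pos ha,
    abs_of_pos hb, div_le_iff₀ ha, div_le_iff₀ hb] at hscaled
  calc |cov[X, Y; μ]| ≤ 6 * τ * a * b := hscaled
    _ = 6 * (τ ^ (1 : ℝ) * τ ^ (-p⁻¹) * τ ^ (-q⁻¹)) * A * B := by
        rw [Real.rpow_one, ha_def, hb_def]; ring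
    _ = 6 * τ ^ (1 - p⁻¹ - q⁻¹) * A * B := by
        rw [← Real.rpow_add hτ, ← Real.rpow_add hτ]; rfl

-- Davydov's inequality. The coefficient and the two norms may vanish, so they are first enlarged
-- by a positive `ε` that then tends to `0`.
theorem abs_covariance_le_strongMixingCoeff_rpow (hm₁ : m₁ ≤ mΩ) (hm₂ : m₂ ≤ mΩ)
    (hp : 0 < p) (hq : 0 < q) (hpq : p⁻¹ + q⁻¹ ≤ 1)
    (hX : Measurable[m₁] X) (hY : Measurable[m₂] Y)
    (hXp : MemLp X (ENNReal.ofReal p) μ) (hYq : MemLp Y (ENNReal.ofReal q) μ) :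
    |cov[X, Y; μ]| ≤ 6 * strongMixingCoeff μ m₁ m₂ ^ (1 - p⁻¹ - q⁻¹) *
      lpNorm X (ENNReal.ofReal p) μ * lpNorm Y (ENNReal.ofReal q) μ := by
  set α := strongMixingCoeff μ m₁ m₂
  set A := lpNorm X (ENNReal.ofReal p) μ
  set B := lpNorm Y (ENNReal.ofReal q) μ
  have hA : 0 ≤ A := lpNorm_nonneg
  have hB : 0 ≤ B := lpNorm_nonneg
  have hα : 0 ≤ α := strongMixingCoeff_nonneg
  have hcont : Continuous fun ε : ℝ ↦ 6 * (α + ε) ^ (1 - p⁻¹ - q⁻¹) * (A + ε) * (B + ε) := by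
    have : Continuous fun ε : ℝ ↦ (α + ε) ^ (1 - p⁻¹ - q⁻¹) :=
      (continuous_const.add continuous_id).rpow_const fun _ ↦ .inr (by linarith)
    fun_prop
  have hlim := (hcont.tendsto 0).mono_left (nhdsWithin_le_nhds (s := Set.Ioi 0))
  simp only [add_zero] at hlim
  refine ge_of_tendsto hlim ?_
  filter_upwards [self_mem_nhdsWithin] with ε (hε : 0 < ε)
  exact abs_covariance_le_of_strongMixingCoeff_le hm₁ hm₂ hp hq hpq hX hY hXp hYq
    (by positivity) (by linarith) (by positivity) (by linarith) (by positivity) (by linarith)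

end Davydov

section Moments

variable {Ω : Type*} {mΩ : MeasurableSpace Ω} {μ : Measure Ω} {X : Ω → ℝ} {p C : ℝ}

lemma eLpNorm_le_ofReal_of_lintegral_le (hp : 0 < p) (hC : 0 ≤ C)
    (h : ∫⁻ ω, ENNReal.ofReal (|X ω| ^ p) ∂μ ≤ ENNReal.ofReal (C ^ p)) :
    eLpNorm X (ENNReal.ofReal p) μ ≤ ENNReal.ofReal C := by
  rw [eLpNorm_eq_lintegral_rpow_enorm_toReal (by simpa using hp) ENNReal.ofReal_ne_top,
    ENNReal.toReal_ofReal hp.le, one_div, ENNReal.rpow_inv_le_iff hp,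
    ENNReal.ofReal_rpow_of_nonneg hC hp.le]
  refine (lintegral_congr fun ω ↦ ?_).trans_le h
  rw [← ofReal_norm, ENNReal.ofReal_rpow_of_nonneg (norm_nonneg _) hp.le,
    Real.norm_eq_abs]

lemma lpNorm_le_of_eLpNorm_le {q : ENNReal} (hX : AEStronglyMeasurable X μ) (hC : 0 ≤ C)
    (h : eLpNorm X q μ ≤ ENNReal.ofReal C) : lpNorm X q μ ≤ C := by
  rw [← toReal_eLpNorm hX]
  exact ENNReal.toReal_le_of_le_ofReal hC h

lemma integral_mul_self_le_sq_of_eLpNorm_le [IsProbabilityMeasure μ] (hp : 2 ≤ p) (hC : 0 ≤ C)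
    (hX : AEStronglyMeasurable X μ)
    (h : eLpNorm X (ENNReal.ofReal p) μ ≤ ENNReal.ofReal C) : ∫ ω, X ω * X ω ∂μ ≤ C ^ 2 := by
  have hsq := integral_abs_rpow_eq_lpNorm_rpow two_pos hX
  have h2 : eLpNorm X (ENNReal.ofReal 2) μ ≤ ENNReal.ofReal C :=
    (eLpNorm_le_eLpNorm_of_exponent_le (ENNReal.ofReal_le_ofReal hp) hX).trans h
  simp only [Real.rpow_two, sq_abs] at hsq
  simp_rw [← sq]
  rw [hsq]
  exact pow_le_pow_left₀ lpNorm_nonneg (lpNorm_le_of_eLpNorm_le hX hC h2) 2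

end Moments

section RowSums

lemma sum_comp_le_tsum_of_injOn {ι : Type*} {κ : Type*} {f : κ → ℝ} (hf : 0 ≤ f)
    (hsum : Summable f) {S : Finset ι} {e : ι → κ} (he : Set.InjOn e S) :
    ∑ i ∈ S, f (e i) ≤ ∑' k, f k := by
  classical
  rw [← Finset.sum_image he]
  exact hsum.sum_le_tsum _ fun k _ ↦ hf k

lemma sum_compl_dist_le_two_mul_tsum {T : ℕ} {f : ℕ → ℝ} (hf : 0 ≤ f)
    (hsum : Summable fun q ↦ f (q + 1)) (s : Fin T) :
    ∑ t ∈ {s}ᶜ, f (Nat.dist s t) ≤ 2 * ∑' q, f (q + 1) := by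
  have hshift : 0 ≤ fun q ↦ f (q + 1) := fun q ↦ hf (q + 1)
  have hfuture : ∑ t ∈ Finset.Ioi s, f (Nat.dist s t) ≤ ∑' q, f (q + 1) := by
    refine (Finset.sum_congr rfl fun t ht ↦ ?_).trans_le <|
      sum_comp_le_tsum_of_injOn hshift hsum (e := fun t : Fin T ↦ (t : ℕ) - s - 1) ?_
    · have : (s : ℕ) < t := Fin.lt_def.mp (Finset.mem_Ioi.mp ht)
      rw [Nat.dist_eq_sub_of_le this.le, Nat.sub_add_cancel (by omega)]
    · simp only [Set.InjOn, Finset.coe_Ioi, Set.mem_Ioi]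
      omega
  have hpast : ∑ t ∈ Finset.Iio s, f (Nat.dist s t) ≤ ∑' q, f (q + 1) := by
    refine (Finset.sum_congr rfl fun t ht ↦ ?_).trans_le <|
      sum_comp_le_tsum_of_injOn hshift hsum (e := fun t : Fin T ↦ (s : ℕ) - t - 1) ?_
    · have : (t : ℕ) < s := Fin.lt_def.mp (Finset.mem_Iio.mp ht)
      rw [Nat.dist_eq_sub_of_le_right this.le, Nat.sub_add_cancel (by omega)]
    · simp only [Set.InjOn, Finset.coe_Iio, Set.mem_Iio]
      omega
  rw [← Finset.Ioi_disjUnion_Iio, Finset.sum_disjUnion, two_mul]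
  exact add_le_add hfuture hpast

lemma sum_abs_average_le {ι κ : Type*} [Fintype κ] {S : Finset ι} (hS : S.Nonempty)
    {c : ι → κ → ℝ} {R : ℝ} (hc : ∀ i ∈ S, ∑ t, |c i t| ≤ R) :
    ∑ t, |(S.card : ℝ)⁻¹ * ∑ i ∈ S, c i t| ≤ R := by
  have hcard : 0 < (S.card : ℝ) := by exact_mod_cast hS.card_pos
  calc ∑ t, |(S.card : ℝ)⁻¹ * ∑ i ∈ S, c i t|
      ≤ ∑ t, (S.card : ℝ)⁻¹ * ∑ i ∈ S, |c i t| := by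
        gcongr with t
        rw [abs_mul, abs_of_pos (inv_pos.mpr hcard)]
        gcongr
        exact Finset.abs_sum_le_sum_abs _ _
    _ = (S.card : ℝ)⁻¹ * ∑ i ∈ S, ∑ t, |c i t| := by rw [← Finset.mul_sum, Finset.sum_comm]
    _ ≤ (S.card : ℝ)⁻¹ * (S.card * R) := by
        gcongr
        simpa only [nsmul_eq_mul] using Finset.sum_le_card_nsmul S _ R hc
    _ = R := inv_mul_cancel_left₀ hcard.ne' R

end RowSums

section Autocovariance

open ProbabilityTheory

variable {Ω : Type*} {mΩ : MeasurableSpace Ω} {μ : Measure Ω} [IsProbabilityMeasure μ]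
  {T : ℕ} {ξ : Fin T → Ω → ℝ} {δ φ C₁ C₂ : ℝ}

lemma strongMixingCoeff_le_alphaMixFin (ξ : Fin T → Ω → ℝ) (t q : ℕ) :
    strongMixingCoeff μ
      (⨆ s : {s : Fin T // (s : ℕ) ≤ t}, MeasurableSpace.comap (ξ s.1) inferInstance)
      (⨆ s : {s : Fin T // t + q ≤ (s : ℕ)}, MeasurableSpace.comap (ξ s.1) inferInstance) ≤
    alphaMixFin μ ξ q := by
  refine csSup_le_csSup ⟨1, ?_⟩ ⟨_, ∅, ∅, MeasurableSpace.measurableSet_empty _,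
    MeasurableSpace.measurableSet_empty _, rfl⟩ ?_
  · rintro _ ⟨_, A, B, -, -, rfl⟩
    exact abs_measureReal_inter_sub_mul_le_one A B
  · rintro _ ⟨A, B, hA, hB, rfl⟩
    exact ⟨t, A, B, hA, hB, rfl⟩

lemma abs_covariance_le_alphaMixFin_rpow (hδ : 2 ≤ δ) (hmeas : ∀ t, Measurable (ξ t))
    (hξ : ∀ t, MemLp (ξ t) (ENNReal.ofReal δ) μ) {s t : Fin T} (hst : s ≤ t) :
    |cov[ξ s, ξ t; μ]| ≤ 6 * alphaMixFin μ ξ (t - s) ^ (1 - 2 / δ) *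
      lpNorm (ξ s) (ENNReal.ofReal δ) μ * lpNorm (ξ t) (ENNReal.ofReal δ) μ := by
  have hδ0 : 0 < δ := by linarith
  have hexp : 1 - δ⁻¹ - δ⁻¹ = 1 - 2 / δ := by ring
  have hθ : 0 ≤ 1 - 2 / δ := sub_nonneg.mpr ((div_le_one hδ0).mpr hδ)
  have hdavydov := abs_covariance_le_strongMixingCoeff_rpow (μ := μ)
    (m₁ := ⨆ r : {r : Fin T // (r : ℕ) ≤ s}, MeasurableSpace.comap (ξ r.1) inferInstance)
    (m₂ := ⨆ r : {r : Fin T // s + (t - s) ≤ (r : ℕ)},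
      MeasurableSpace.comap (ξ r.1) inferInstance)
    (iSup_le fun r ↦ (hmeas r.1).comap_le) (iSup_le fun r ↦ (hmeas r.1).comap_le)
    hδ0 hδ0 (by linarith)
    ((comap_measurable (ξ s)).mono (le_iSup_of_le ⟨s, le_rfl⟩ le_rfl) le_rfl)
    ((comap_measurable (ξ t)).mono (le_iSup_of_le ⟨t, (Nat.add_sub_of_le hst).le⟩ le_rfl) le_rfl)
    (hξ s) (hξ t)
  rw [hexp] at hdavydov
  refine hdavydov.trans ?_
  gcongr
  · exact lpNorm_nonneg
  · exact lpNorm_nonneg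
  · exact strongMixingCoeff_nonneg
  · exact strongMixingCoeff_le_alphaMixFin ξ s (t - s)

lemma abs_integral_mul_le_of_lt (hδ : 2 ≤ δ) (hC₁ : 0 ≤ C₁) (hC₂ : 0 ≤ C₂)
    (hmeas : ∀ t, Measurable (ξ t)) (hmean : ∀ t, ∫ ω, ξ t ω ∂μ = 0)
    (hmom : ∀ t, eLpNorm (ξ t) (ENNReal.ofReal δ) μ ≤ ENNReal.ofReal C₁)
    (hmix : ∀ q : ℕ, 0 < q → alphaMixFin μ ξ q ≤ C₂ * (q : ℝ) ^ (-φ)) {s t : Fin T} (hst : s < t) :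
    |∫ ω, ξ s ω * ξ t ω ∂μ| ≤ 6 * C₁ ^ 2 * C₂ ^ (1 - 2 / δ) *
      ((t - s : ℕ) : ℝ) ^ (-(φ * (1 - 2 / δ))) := by
  have hδ0 : 0 < δ := by linarith
  have hinv : δ⁻¹ + δ⁻¹ ≤ 1 := by rwa [← two_mul, ← div_eq_mul_inv, div_le_one hδ0]
  have hθ : 0 ≤ 1 - 2 / δ := sub_nonneg.mpr ((div_le_one hδ0).mpr hδ)
  have hLp t : MemLp (ξ t) (ENNReal.ofReal δ) μ :=
    ⟨(hmeas t).aestronglyMeasurable, (hmom t).trans_lt ENNReal.ofReal_lt_top⟩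
  have hnorm t : lpNorm (ξ t) (ENNReal.ofReal δ) μ ≤ C₁ :=
    lpNorm_le_of_eLpNorm_le (hLp t).1 hC₁ (hmom t)
  have hcov : cov[ξ s, ξ t; μ] = ∫ ω, ξ s ω * ξ t ω ∂μ := by
    rw [covariance_eq_integral_mul_sub_mul
      (integrable_of_inv_add_inv_le_one hδ0 hδ0 hinv (hLp s))
      (integrable_of_inv_add_inv_le_one hδ0 hδ0 hinv (hLp t))
      (integrable_mul_of_inv_add_inv_le_one hδ0 hδ0 hinv (hLp s) (hLp t)), hmean s,
      zero_mul, sub_zero]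
  rw [← hcov]
  calc |cov[ξ s, ξ t; μ]|
      ≤ 6 * alphaMixFin μ ξ (t - s) ^ (1 - 2 / δ) *
          lpNorm (ξ s) (ENNReal.ofReal δ) μ * lpNorm (ξ t) (ENNReal.ofReal δ) μ :=
        abs_covariance_le_alphaMixFin_rpow hδ hmeas hLp hst.le
    _ ≤ 6 * (C₂ * ((t - s : ℕ) : ℝ) ^ (-φ)) ^ (1 - 2 / δ) * C₁ * C₁ := by
        gcongr
        · exact lpNorm_nonneg
        · exact lpNorm_nonneg
        · exact strongMixingCoeff_nonneg.trans (strongMixingCoeff_le_alphaMixFin ξ s (t - s))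
        · exact hmix _ (by have : (s : ℕ) < t := hst; omega)
        · exact hnorm s
        · exact hnorm t
    _ = 6 * C₁ ^ 2 * C₂ ^ (1 - 2 / δ) * ((t - s : ℕ) : ℝ) ^ (-(φ * (1 - 2 / δ))) := by
        rw [Real.mul_rpow hC₂ (by positivity), ← Real.rpow_mul (by positivity), neg_mul]
        ring

lemma abs_integral_mul_le_of_ne (hδ : 2 ≤ δ) (hC₁ : 0 ≤ C₁) (hC₂ : 0 ≤ C₂)
    (hmeas : ∀ t, Measurable (ξ t)) (hmean : ∀ t, ∫ ω, ξ t ω ∂μ = 0)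
    (hmom : ∀ t, eLpNorm (ξ t) (ENNReal.ofReal δ) μ ≤ ENNReal.ofReal C₁)
    (hmix : ∀ q : ℕ, 0 < q → alphaMixFin μ ξ q ≤ C₂ * (q : ℝ) ^ (-φ)) {s t : Fin T}
    (hst : s ≠ t) :
    |∫ ω, ξ s ω * ξ t ω ∂μ| ≤ 6 * C₁ ^ 2 * C₂ ^ (1 - 2 / δ) *
      (Nat.dist s t : ℝ) ^ (-(φ * (1 - 2 / δ))) := by
  wlog hlt : s < t generalizing s t
  · simpa only [mul_comm, Nat.dist_comm] using this hst.symm (hst.lt_or_gt.resolve_left hlt)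
  rw [Nat.dist_eq_sub_of_le (Fin.le_def.mp hlt.le)]
  exact abs_integral_mul_le_of_lt hδ hC₁ hC₂ hmeas hmean hmom hmix hlt

lemma sum_abs_integral_mul_le (hδ : 2 ≤ δ) (hφ : 1 < φ * (1 - 2 / δ)) (hC₁ : 0 ≤ C₁)
    (hC₂ : 0 ≤ C₂) (hmeas : ∀ t, Measurable (ξ t)) (hmean : ∀ t, ∫ ω, ξ t ω ∂μ = 0)
    (hmom : ∀ t, eLpNorm (ξ t) (ENNReal.ofReal δ) μ ≤ ENNReal.ofReal C₁)
    (hmix : ∀ q : ℕ, 0 < q → alphaMixFin μ ξ q ≤ C₂ * (q : ℝ) ^ (-φ)) (s : Fin T) :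
    ∑ t, |∫ ω, ξ s ω * ξ t ω ∂μ| ≤ C₁ ^ 2 * (1 + 12 * C₂ ^ (1 - 2 / δ) *
      ∑' q : ℕ, ((q : ℝ) + 1) ^ (-(φ * (1 - 2 / δ)))) := by
  have hsum : Summable fun q : ℕ ↦ ((q + 1 : ℕ) : ℝ) ^ (-(φ * (1 - 2 / δ))) :=
    (summable_nat_add_iff 1).mpr (Real.summable_nat_rpow.mpr (neg_lt_neg hφ))
  have hdiag : |∫ ω, ξ s ω * ξ s ω ∂μ| ≤ C₁ ^ 2 := by
    rw [abs_of_nonneg (integral_nonneg fun _ ↦ mul_self_nonneg _)]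
    exact integral_mul_self_le_sq_of_eLpNorm_le hδ hC₁ (hmeas s).aestronglyMeasurable (hmom s)
  have hoff : ∑ t ∈ {s}ᶜ, |∫ ω, ξ s ω * ξ t ω ∂μ| ≤
      6 * C₁ ^ 2 * C₂ ^ (1 - 2 / δ) *
        (2 * ∑' q : ℕ, ((q + 1 : ℕ) : ℝ) ^ (-(φ * (1 - 2 / δ)))) := calc
    _ ≤ ∑ t ∈ {s}ᶜ, 6 * C₁ ^ 2 * C₂ ^ (1 - 2 / δ) *
          (Nat.dist s t : ℝ) ^ (-(φ * (1 - 2 / δ))) :=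
      Finset.sum_le_sum fun t ht ↦ abs_integral_mul_le_of_ne hδ hC₁ hC₂ hmeas hmean hmom hmix
        (by simpa [eq_comm] using ht)
    _ ≤ _ := by
      rw [← Finset.mul_sum]
      gcongr
      exact sum_compl_dist_le_two_mul_tsum (f := fun q ↦ (q : ℝ) ^ (-(φ * (1 - 2 / δ))))
        (fun q ↦ by positivity) hsum s
  rw [Fintype.sum_eq_add_sum_compl s]
  push_cast at hoff
  linarith

end Autocovariance

section SchurTest

variable {m n : ℕ} {A : Matrix (Fin m) (Fin n) ℝ} {R C : ℝ}

lemma mulVec_sq_le_sum_abs_mul_sum (A : Matrix (Fin m) (Fin n) ℝ) (x : Fin n → ℝ) (s : Fin m) :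
    A.mulVec x s ^ 2 ≤ (∑ t, |A s t|) * ∑ t, |A s t| * x t ^ 2 :=
  Finset.sum_sq_le_sum_mul_sum_of_sq_le_mul (r := fun t ↦ A s t * x t) Finset.univ
    (fun _ _ ↦ abs_nonneg _) (fun _ _ ↦ by positivity) fun t _ ↦ by
      rw [mul_pow, ← mul_assoc, abs_mul_abs_self, ← sq]

theorem matSpecNorm_le_sqrt_of_sum_abs_le (hR : 0 ≤ R) (hC : 0 ≤ C)
    (hrow : ∀ s, ∑ t, |A s t| ≤ R) (hcol : ∀ t, ∑ s, |A s t| ≤ C) :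
    matSpecNorm A ≤ √(R * C) := by
  refine Real.sSup_le ?_ (Real.sqrt_nonneg _)
  rintro _ ⟨x, hx, rfl⟩
  refine Real.sqrt_le_sqrt ?_
  calc ∑ s, A.mulVec x s ^ 2 ≤ ∑ s, R * ∑ t, |A s t| * x t ^ 2 := by
        gcongr with s
        refine (mulVec_sq_le_sum_abs_mul_sum A x s).trans ?_
        gcongr
        exact hrow s
    _ = R * ∑ t, (∑ s, |A s t|) * x t ^ 2 := by
        rw [← Finset.mul_sum, Finset.sum_comm]
        simp_rw [Finset.sum_mul]
    _ ≤ R * ∑ t, C * x t ^ 2 := by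
        gcongr with t
        exact hcol t
    _ = R * C * ∑ t, x t ^ 2 := by rw [← Finset.mul_sum, mul_assoc]
    _ ≤ R * C := mul_le_of_le_one_right (by positivity) (Real.sqrt_le_one.mp hx)

lemma matSpecNorm_le_of_isSymm {A : Matrix (Fin n) (Fin n) ℝ} (hA : A.IsSymm) (hR : 0 ≤ R)
    (hrow : ∀ s, ∑ t, |A s t| ≤ R) : matSpecNorm A ≤ R :=
  (matSpecNorm_le_sqrt_of_sum_abs_le hR hR hrow fun t ↦ by
    simpa only [hA.apply] using hrow t).trans_eq (Real.sqrt_mul_self hR)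

end SchurTest

theorem stmt_19_general {Ω : Type*} [MeasurableSpace Ω] (μ : Measure Ω) [IsProbabilityMeasure μ]
    {δ φ C₁ C₂ : ℝ} (hδ : 2 < δ) (hφ : 1 < φ * (1 - 2 / δ)) (hC₁ : 0 ≤ C₁) (hC₂ : 0 ≤ C₂)
    {N T : ℕ} (hN : 0 < N) (a : Fin N → Ω → Fin T → ℝ)
    (hmeas : ∀ i t, Measurable fun ω ↦ a i ω t)
    (hmean : ∀ i t, ∫ ω, a i ω t ∂μ = 0)
    (hmom : ∀ i t, ∫⁻ ω, ENNReal.ofReal (|a i ω t| ^ δ) ∂μ ≤ ENNReal.ofReal (C₁ ^ δ))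
    (hmix : ∀ i, ∀ q : ℕ, 0 < q →
      alphaMixFin μ (fun t ω ↦ a i ω t) q ≤ C₂ * (q : ℝ) ^ (-φ)) :
    matSpecNorm (Matrix.of fun s t : Fin T ↦
        (N : ℝ)⁻¹ * ∑ i : Fin N, ∫ ω, a i ω s * a i ω t ∂μ) ≤
      C₁ ^ 2 * (1 + 12 * C₂ ^ (1 - 2 / δ) *
        ∑' q : ℕ, ((q : ℝ) + 1) ^ (-(φ * (1 - 2 / δ)))) := by
  have : NeZero N := ⟨hN.ne'⟩
  have hrow i s := sum_abs_integral_mul_le hδ.le hφ hC₁ hC₂ (hmeas i) (hmean i)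
    (fun t ↦ eLpNorm_le_ofReal_of_lintegral_le (by linarith) hC₁ (hmom i t)) (hmix i) s
  refine matSpecNorm_le_of_isSymm (.ext fun s t ↦ ?_) ?_ fun s ↦ ?_
  · simp only [Matrix.of_apply, mul_comm (a _ _ t)]
  · have : 0 ≤ ∑' q : ℕ, ((q : ℝ) + 1) ^ (-(φ * (1 - 2 / δ))) :=
      tsum_nonneg fun q ↦ by positivity
    positivity
  · simpa using sum_abs_average_le Finset.univ_nonempty fun i _ ↦ hrow i s

/-- Spectral-norm bound for the averaged second-moment matrix
`Σ = N⁻¹ Σᵢ E[aᵢ aᵢᵀ]` of mean-zero weakly dependent rows: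
`‖Σ‖₂ ≤ C₁² (1 + 16 C₂^{1−2/δ} Σ_{q=1}^∞ q^{−φ(1−2/δ)})`. -/
theorem stmt_19 (δ φ C₁ C₂ : ℝ) (hδ : 2 < δ) (hφ : φ * (1 - 2 / δ) > 1)
    (hC₁ : 0 ≤ C₁) (hC₂ : 0 ≤ C₂)
    {Ω : Type} [MeasurableSpace Ω] (μ : Measure Ω) [IsProbabilityMeasure μ]
    (N T : ℕ) (hN : 0 < N) (hT : 0 < T)
    (a : Fin N → Ω → Fin T → ℝ)
    (hmeas : ∀ i t, Measurable fun ω => a i ω t)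
    (hmean : ∀ i t, ∫ ω, a i ω t ∂μ = 0)
    (hmom : ∀ i t, ∫⁻ ω, ENNReal.ofReal (|a i ω t| ^ δ) ∂μ ≤ ENNReal.ofReal (C₁ ^ δ))
    (hmix : ∀ i, ∀ q : ℕ, 0 < q →
      alphaMixFin μ (fun t ω => a i ω t) q ≤ C₂ * (q : ℝ) ^ (-φ)) :
    matSpecNorm (Matrix.of fun s t : Fin T =>
        (N : ℝ)⁻¹ * ∑ i : Fin N, ∫ ω, a i ω s * a i ω t ∂μ) ≤
      C₁ ^ 2 * (1 + 16 * C₂ ^ (1 - 2 / δ) *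
        ∑' q : ℕ, ((q : ℝ) + 1) ^ (-(φ * (1 - 2 / δ)))) := by
  refine (stmt_19_general μ hδ hφ hC₁ hC₂ hN a hmeas hmean hmom hmix).trans ?_
  have : 0 ≤ ∑' q : ℕ, ((q : ℝ) + 1) ^ (-(φ * (1 - 2 / δ))) := tsum_nonneg fun q ↦ by positivity
  gcongr
  norm_num
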